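/- Let ν ∈ [0,1] and set σ_1(x) = 1 - cosh(νx)/(2 cosh x) and σ_2(x) = cosh(νx)/cosh(x) for x > 0. Then the Laplace transforms L(σ_1) and L(σ_2) are generalized Stieltjes functions of order 2 (hence logarithmically completely monotonic), and for x > 0: L(σ_1)(x) = 1/x - (1/4)(β((x+1-ν)/2) + β((x+1+ν)/2)) and L(σ_2)(x) = (1/2)(β((x+1-ν)/2) + β((x+1+ν)/2)), where β is Nielsen's beta function. -/

import Mathlib

open MeasureTheory Filter Set

/-- The Laplace transform of `g`. -/
noncomputable def LaplaceTransform (g : ℝ → ℝ) (x : ℝ) : ℝ :=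
  ∫ t in Set.Ioi (0:ℝ), Real.exp (-x * t) * g t

/-- `f` is completely monotonic on `(0,∞)`. -/
def CompletelyMonotonic (f : ℝ → ℝ) : Prop :=
  (∀ x : ℝ, 0 < x → ContDiffAt ℝ (⊤ : ℕ∞) f x) ∧
  ∀ (n : ℕ) (x : ℝ), 0 < x → 0 ≤ (-1 : ℝ) ^ n * iteratedDeriv n f x

/-- `f` is logarithmically completely monotonic on `(0,∞)`. -/
def LogCompletelyMonotonic (f : ℝ → ℝ) : Prop :=
  (∀ x : ℝ, 0 < x → 0 < f x) ∧ (∀ x : ℝ, 0 < x → ContDiffAt ℝ (⊤ : ℕ∞) f x) ∧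
  CompletelyMonotonic (fun x => -deriv f x / f x)

/-- `f` is a generalized Stieltjes function of order `lam` on `(0,∞)`. -/
def IsGenStieltjes (lam : ℝ) (f : ℝ → ℝ) : Prop :=
  ∃ (μ : Measure ℝ) (c : ℝ), 0 ≤ c ∧ μ (Set.Iio 0) = 0 ∧
    ∀ x : ℝ, 0 < x →
      Integrable (fun t => (x + t) ^ (-lam)) μ ∧
      f x = (∫ t, (x + t) ^ (-lam) ∂μ) + c

/-- Nielsen's beta function. -/
noncomputable def nielsenBeta (x : ℝ) : ℝ :=
  ∫ t in Set.Ioi (0:ℝ), Real.exp (-x * t) / (1 + Real.exp (-t))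

/-!
Let `F x = ∑ aᵢ / (x + tᵢ)² + c` with `aᵢ, c > 0` and `tᵢ ≥ 0`. Writing `F` as a quotient of
polynomials gives `-F' / F = 2 ∑ᵢ (x + tᵢ)⁻¹ - ∑_z (x - z)⁻¹`, where `z` runs over the roots of `F`;
they are non-real, and simple for all but finitely many `c`. For the roots `ζⱼ` in one open
half-plane, `F ζᵢ = F (conj ζⱼ)` says that the vectors `xⱼ = (√aₖ / (ζⱼ + tₖ)²)ₖ` satisfy
`2 ⟪xⱼ, T xᵢ⟫ + (ζᵢ + conj ζⱼ) ⟪xⱼ, xᵢ⟫ = 0` with `T = diag t`. Gram–Schmidt turns this into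
orthonormal vectors `uⱼ` with `⟪uⱼ, T uⱼ⟫ = -Re ζⱼ`, and Jensen's and Bessel's inequalities yield
`∑ⱼ Re (x - ζⱼ)⁻ⁿ ≤ ∑ᵢ (x + tᵢ)⁻ⁿ`. Adding both half-planes, `-F' / F` is completely monotonic, and
approximation extends this to every positive generalized Stieltjes function of order 2.

For the hyperbolic quotients, `cosh (νs) / cosh s = k (1 - ν) s + k (1 + ν) s` with
`k a s = e⁻ᵃˢ / (1 + e⁻²ˢ)`. Both `k a` and `1 - k a` are `s` times the Laplace transform of the
indicator of a set, whence Fubini and `∫₀^∞ s e^{-(x + t)s} ds = (x + t)⁻²` put their Laplace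
transforms into `S₂`.
-/

section DerivativeChains

variable {𝕜 : Type*} [NontriviallyNormedField 𝕜] {E : Type*} [NormedAddCommGroup E]
  [NormedSpace 𝕜 E] {s : Set 𝕜} {x : 𝕜} {J : ℕ → 𝕜 → E}

lemma iteratedDeriv_eq_of_hasDerivAt_chain (hs : IsOpen s)
    (hJ : ∀ n, ∀ y ∈ s, HasDerivAt (J n) (J (n + 1) y) y) (n : ℕ) (hx : x ∈ s) :
    iteratedDeriv n (J 0) x = J n x := by
  induction n generalizing x with
  | zero => rw [iteratedDeriv_zero]
  | succ n ih =>
    have h_near : iteratedDeriv n (J 0) =ᶠ[nhds x] J n :=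
      eventually_of_mem (hs.mem_nhds hx) fun _ hy => ih hy
    rw [iteratedDeriv_succ, h_near.deriv_eq, (hJ n x hx).deriv]

lemma contDiffAt_of_hasDerivAt_chain (hs : IsOpen s)
    (hJ : ∀ n, ∀ y ∈ s, HasDerivAt (J n) (J (n + 1) y) y) (hx : x ∈ s) :
    ContDiffAt 𝕜 (⊤ : ℕ∞) (J 0) x := by
  refine (contDiffOn_of_differentiableOn_deriv fun m _ => ?_).contDiffAt (hs.mem_nhds hx)
  have h_eq : EqOn (iteratedDerivWithin m (J 0) s) (J m) s := fun y hy => by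
    rw [iteratedDerivWithin_of_isOpen hs hy, iteratedDeriv_eq_of_hasDerivAt_chain hs hJ m hy]
  exact DifferentiableOn.congr
    (fun y hy => (hJ m y hy).differentiableAt.differentiableWithinAt) h_eq

end DerivativeChains

lemma completelyMonotonic_congr {f g : ℝ → ℝ} (hfg : ∀ x, 0 < x → f x = g x)
    (hg : CompletelyMonotonic g) : CompletelyMonotonic f := by
  have h_near (x : ℝ) (hx : 0 < x) : f =ᶠ[nhds x] g :=
    eventually_of_mem (Ioi_mem_nhds hx) hfg
  exact ⟨fun x hx => (hg.1 x hx).congr_of_eventuallyEq (h_near x hx),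
    fun n x hx => (h_near x hx).iteratedDeriv_eq n ▸ hg.2 n x hx⟩

lemma completelyMonotonic_of_hasDerivAt_chain {J : ℕ → ℝ → ℝ}
    (hJ : ∀ n x, 0 < x → HasDerivAt (J n) (J (n + 1) x) x)
    (h_sign : ∀ n x, 0 < x → 0 ≤ (-1) ^ n * J n x) : CompletelyMonotonic (J 0) :=
  ⟨fun _ hx => contDiffAt_of_hasDerivAt_chain isOpen_Ioi hJ hx, fun n x hx =>
    (iteratedDeriv_eq_of_hasDerivAt_chain isOpen_Ioi hJ n hx).symm ▸ h_sign n x hx⟩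

section LogarithmicDerivative

variable {𝕜 : Type*} [NontriviallyNormedField 𝕜] {f g : 𝕜 → 𝕜} {x : 𝕜}

lemma contDiffAt_logDeriv (hf : ContDiffAt 𝕜 (⊤ : ℕ∞) f x) (hfx : f x ≠ 0) :
    ContDiffAt 𝕜 (⊤ : ℕ∞) (logDeriv f) x :=
  (hf.derivWithin (m := (⊤ : ℕ∞)) le_rfl).div hf hfx

lemma iteratedDeriv_succ_eq_sum_logDeriv (hf : ContDiffAt 𝕜 (⊤ : ℕ∞) f x) (hfx : f x ≠ 0)
    (n : ℕ) :
    iteratedDeriv (n + 1) f x = ∑ i ∈ Finset.range (n + 1),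
      n.choose i * iteratedDeriv i f x * iteratedDeriv (n - i) (logDeriv f) x := by
  have h_deriv : deriv f =ᶠ[nhds x] f * logDeriv f := by
    filter_upwards [hf.continuousAt.eventually_ne hfx] with y hy
    rw [Pi.mul_apply, logDeriv_apply, mul_div_cancel₀ _ hy]
  have h_le : (n : WithTop ℕ∞) ≤ (⊤ : ℕ∞) := mod_cast le_top
  rw [iteratedDeriv_succ', h_deriv.iteratedDeriv_eq,
    iteratedDeriv_mul (hf.of_le h_le) ((contDiffAt_logDeriv hf hfx).of_le h_le)]

lemma iteratedDeriv_logDeriv_eq (hf : ContDiffAt 𝕜 (⊤ : ℕ∞) f x) (hfx : f x ≠ 0) (n : ℕ) :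
    iteratedDeriv n (logDeriv f) x = (iteratedDeriv (n + 1) f x - ∑ i ∈ Finset.range n,
      n.choose (i + 1) * iteratedDeriv (i + 1) f x *
        iteratedDeriv (n - (i + 1)) (logDeriv f) x) / f x := by
  rw [iteratedDeriv_succ_eq_sum_logDeriv hf hfx, Finset.sum_range_succ', add_sub_cancel_left]
  simp [hfx]

lemma tendsto_iteratedDeriv_logDeriv {κ : Type*} {l : Filter κ} {F : κ → 𝕜 → 𝕜}
    (hF : ∀ᶠ k in l, ContDiffAt 𝕜 (⊤ : ℕ∞) (F k) x ∧ F k x ≠ 0)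
    (hg : ContDiffAt 𝕜 (⊤ : ℕ∞) g x) (hgx : g x ≠ 0)
    (h_lim : ∀ n, Tendsto (fun k => iteratedDeriv n (F k) x) l (nhds (iteratedDeriv n g x)))
    (n : ℕ) :
    Tendsto (fun k => iteratedDeriv n (logDeriv (F k)) x) l
      (nhds (iteratedDeriv n (logDeriv g) x)) := by
  induction n using Nat.strong_induction_on with
  | _ n ih =>
    have h_lim₀ : Tendsto (fun k => F k x) l (nhds (g x)) := by simpa using h_lim 0
    rw [iteratedDeriv_logDeriv_eq hg hgx]
    refine Tendsto.congr' (hF.mono fun k hk => (iteratedDeriv_logDeriv_eq hk.1 hk.2 n).symm) ?_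
    refine ((h_lim _).sub (tendsto_finsetSum _ fun i hi => ?_)).div h_lim₀ hgx
    have h_lt : n - (i + 1) < n := by have := Finset.mem_range.1 hi; omega
    exact (tendsto_const_nhds.mul (h_lim _)).mul (ih _ h_lt)

end LogarithmicDerivative

lemma neg_deriv_div_eq_neg_logDeriv (f : ℝ → ℝ) :
    (fun x => -deriv f x / f x) = fun x => -logDeriv f x := by
  ext x
  rw [logDeriv_apply, neg_div]

lemma logCompletelyMonotonic_of_tendsto {κ : Type*} {l : Filter κ} [l.NeBot] {F : κ → ℝ → ℝ}
    {g : ℝ → ℝ} (hF : ∀ᶠ k in l, LogCompletelyMonotonic (F k))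
    (hg_pos : ∀ x, 0 < x → 0 < g x) (hg : ∀ x, 0 < x → ContDiffAt ℝ (⊤ : ℕ∞) g x)
    (h_lim : ∀ n x, 0 < x →
      Tendsto (fun k => iteratedDeriv n (F k) x) l (nhds (iteratedDeriv n g x))) :
    LogCompletelyMonotonic g := by
  refine ⟨hg_pos, hg, ?_⟩
  simp only [LogCompletelyMonotonic, neg_deriv_div_eq_neg_logDeriv] at hF ⊢
  refine ⟨fun x hx => (contDiffAt_logDeriv (hg x hx) (hg_pos x hx).ne').neg, fun n x hx => ?_⟩
  have h_lim_log := tendsto_iteratedDeriv_logDeriv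
    (hF.mono fun k hk => ⟨hk.2.1 x hx, (hk.1 x hx).ne'⟩) (hg x hx) (hg_pos x hx).ne'
    fun n => h_lim n x hx
  simp only [CompletelyMonotonic, iteratedDeriv_fun_neg] at hF ⊢
  exact ge_of_tendsto ((h_lim_log n).neg.const_mul _) (hF.mono fun k hk => hk.2.2.2 n x hx)

lemma exists_linearMap_eq_smul {ι K V : Type*} [Field K] [AddCommGroup V] [Module K V] {x : ι → V}
    (hx : LinearIndependent K x) (ζ : ι → K) : ∃ B : V →ₗ[K] V, ∀ i, B (x i) = ζ i • x i := by
  obtain ⟨B, hB⟩ := LinearMap.exists_extend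
    ((Module.Basis.span hx).constr K fun i => ζ i • x i)
  refine ⟨B, fun i => ?_⟩
  have := LinearMap.congr_fun hB (Module.Basis.span hx i)
  rwa [Module.Basis.constr_basis, LinearMap.comp_apply, Submodule.subtype_apply,
    Module.Basis.span_apply] at this

section LyapunovEquation

open InnerProductSpace ComplexConjugate

variable {𝕜 E : Type*} [RCLike 𝕜] [NormedAddCommGroup E] [InnerProductSpace 𝕜 E]

lemma inner_gramSchmidtNormed_map_self {ι : Type*} [LinearOrder ι] [LocallyFiniteOrderBot ι]
    [WellFoundedLT ι] {x : ι → E} (hx : LinearIndependent 𝕜 x) {ζ : ι → 𝕜} {B : E →ₗ[𝕜] E}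
    (hB : ∀ i, B (x i) = ζ i • x i) (j : ι) :
    inner 𝕜 (gramSchmidtNormed 𝕜 x j) (B (gramSchmidtNormed 𝕜 x j)) = ζ j := by
  set u := gramSchmidtNormed 𝕜 x j
  have hu_mem : u ∈ Submodule.span 𝕜 (x '' Iic j) := by
    rw [← span_gramSchmidt_Iic 𝕜 x j, ← span_gramSchmidtNormed x]
    exact Submodule.subset_span ⟨j, self_mem_Iic, rfl⟩
  have hu_orth : ∀ v ∈ Submodule.span 𝕜 (x '' Iic j), inner 𝕜 u (B v - ζ j • v) = 0 := by
    intro v hv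
    induction hv using Submodule.span_induction with
    | mem v hv =>
      obtain ⟨i, hi, rfl⟩ := hv
      rcases (mem_Iic.1 hi).eq_or_lt with rfl | hij
      · rw [hB, sub_self, inner_zero_right]
      · have hu_orth_x : inner 𝕜 u (x i) = 0 := by
          refine (inner_smul_left _ _ _).trans ?_
          rw [gramSchmidt_inv_triangular 𝕜 x hij, mul_zero]
        rw [hB, ← sub_smul, inner_smul_right, hu_orth_x, mul_zero]
    | zero => simp
    | add v w _ _ hv hw =>
      rw [map_add, smul_add, add_sub_add_comm, inner_add_right, hv, hw, add_zero]
    | smul r v _ hv => rw [map_smul, smul_comm, ← smul_sub, inner_smul_right, hv, mul_zero]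
  have hu_norm : ‖u‖ = 1 := gramSchmidtNormed_unit_length j hx
  have := hu_orth u hu_mem
  rwa [inner_sub_right, inner_smul_right, inner_self_eq_norm_sq_to_K, hu_norm, RCLike.ofReal_one,
    one_pow, mul_one, sub_eq_zero] at this

lemma inner_lyapunov_eq_zero_of_mem_span {s : Set E} {A B : E →ₗ[𝕜] E}
    (h : ∀ v ∈ s, ∀ w ∈ s, 2 * inner 𝕜 v (A w) + inner 𝕜 v (B w) + inner 𝕜 (B v) w = 0)
    {v w : E} (hv : v ∈ Submodule.span 𝕜 s) (hw : w ∈ Submodule.span 𝕜 s) :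
    2 * inner 𝕜 v (A w) + inner 𝕜 v (B w) + inner 𝕜 (B v) w = 0 := by
  induction hv, hw using Submodule.span_induction₂ with
  | mem_mem v w hv hw => exact h v hv w hw
  | zero_left | zero_right => simp
  | add_left v₁ v₂ w _ _ _ h₁ h₂ =>
    simp only [map_add, inner_add_left]
    linear_combination h₁ + h₂
  | add_right v w₁ w₂ _ _ _ h₁ h₂ =>
    simp only [map_add, inner_add_right]
    linear_combination h₁ + h₂
  | smul_left r v w _ _ h₁ =>
    simp only [map_smul, inner_smul_left]
    linear_combination conj r * h₁
  | smul_right r v w _ _ h₁ =>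
    simp only [map_smul, inner_smul_right]
    linear_combination r * h₁

variable {A : E →ₗ[𝕜] E} {m : ℕ} {x : Fin m → E} {ζ : Fin m → 𝕜}

lemma sum_mul_smul_eq_zero_of_lyapunov
    (h : ∀ i j, 2 * inner 𝕜 (x j) (A (x i)) + (ζ i + conj (ζ j)) * inner 𝕜 (x j) (x i) = 0)
    {α : Fin m → 𝕜} (hα : ∑ i, α i • x i = 0) : ∑ i, (α i * ζ i) • x i = 0 := by
  have h_inner (y : E) : ∑ i, α i * inner 𝕜 y (x i) = 0 := by
    simpa [inner_sum, inner_smul_right] using congrArg (inner 𝕜 y) hα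
  have h_inner_A (y : E) : ∑ i, α i * inner 𝕜 y (A (x i)) = 0 := by
    simpa [inner_sum, inner_smul_right] using congrArg (fun v => inner 𝕜 y (A v)) hα
  have h_orth (j : Fin m) : inner 𝕜 (x j) (∑ i, (α i * ζ i) • x i) = 0 :=
    calc inner 𝕜 (x j) (∑ i, (α i * ζ i) • x i)
        = ∑ i, α i * (2 * inner 𝕜 (x j) (A (x i)) + (ζ i + conj (ζ j)) * inner 𝕜 (x j) (x i))
          - 2 * ∑ i, α i * inner 𝕜 (x j) (A (x i))
          - conj (ζ j) * ∑ i, α i * inner 𝕜 (x j) (x i) := by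
          simp only [inner_sum, inner_smul_right, Finset.mul_sum, ← Finset.sum_sub_distrib]
          exact Finset.sum_congr rfl fun i _ => by ring
      _ = 0 := by simp [h, h_inner, h_inner_A]
  refine inner_self_eq_zero (𝕜 := 𝕜) |>.1 ?_
  conv_lhs => rw [sum_inner]
  exact Finset.sum_eq_zero fun j _ => by rw [inner_smul_left, h_orth j, mul_zero]

lemma linearIndependent_of_lyapunov (hζ : Function.Injective ζ) (hx : ∀ j, x j ≠ 0)
    (h : ∀ i j, 2 * inner 𝕜 (x j) (A (x i)) + (ζ i + conj (ζ j)) * inner 𝕜 (x j) (x i) = 0) :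
    LinearIndependent 𝕜 x := by
  refine Fintype.linearIndependent_iff.2 fun α hα j => ?_
  have h_pow (k : ℕ) : ∑ i, (α i * ζ i ^ k) • x i = 0 := by
    induction k with
    | zero => simpa using hα
    | succ k ih => simpa [pow_succ, mul_assoc] using sum_mul_smul_eq_zero_of_lyapunov h ih
  have h_vandermonde : (fun i => α i * inner 𝕜 (x j) (x i)) = 0 := by
    refine Matrix.eq_zero_of_forall_pow_sum_mul_pow_eq_zero hζ fun k => ?_
    have := congrArg (inner 𝕜 (x j)) (h_pow k)
    simpa [inner_sum, inner_smul_right, mul_right_comm] using this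
  simpa [hx j] using congrFun h_vandermonde j

/-- The map `B` with eigenvectors `x i` satisfies `2A + B + B* = 0` as a form on their span, and
Gram–Schmidt makes it triangular with diagonal `ζ`. -/
lemma exists_orthonormal_re_inner_eq_neg_re (hζ : Function.Injective ζ) (hx : ∀ j, x j ≠ 0)
    (h : ∀ i j, 2 * inner 𝕜 (x j) (A (x i)) + (ζ i + conj (ζ j)) * inner 𝕜 (x j) (x i) = 0) :
    ∃ u : Fin m → E, Orthonormal 𝕜 u ∧
      ∀ j, RCLike.re (inner 𝕜 (u j) (A (u j))) = -RCLike.re (ζ j) := by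
  have hli := linearIndependent_of_lyapunov hζ hx h
  obtain ⟨B, hB⟩ := exists_linearMap_eq_smul hli ζ
  refine ⟨gramSchmidtNormed 𝕜 x, gramSchmidtNormed_orthonormal hli, fun j => ?_⟩
  have hu_mem : gramSchmidtNormed 𝕜 x j ∈ Submodule.span 𝕜 (range x) := by
    rw [← span_gramSchmidt 𝕜 x, ← span_gramSchmidtNormed_range]
    exact Submodule.subset_span ⟨j, rfl⟩
  have hu_diag := inner_gramSchmidtNormed_map_self hli hB j
  have h_form := inner_lyapunov_eq_zero_of_mem_span (A := A) (B := B) (s := range x) (by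
    rintro _ ⟨k, rfl⟩ _ ⟨i, rfl⟩
    rw [hB, hB, inner_smul_right, inner_smul_left]
    linear_combination h i k) hu_mem hu_mem
  rw [← inner_conj_symm (B _), hu_diag, two_mul] at h_form
  have h_re := congrArg RCLike.re h_form
  simp only [map_add, RCLike.conj_re, map_zero] at h_re
  linarith

end LyapunovEquation

lemma sum_convexOn_sum_norm_sq_le {ι κ 𝕜 : Type*} [Fintype ι] [Fintype κ] [RCLike 𝕜]
    {u : κ → EuclideanSpace 𝕜 ι} (hu : Orthonormal 𝕜 u) {s : Set ℝ} {φ : ℝ → ℝ}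
    (hφ : ConvexOn ℝ s φ) (hφ_nonneg : ∀ y ∈ s, 0 ≤ φ y) {t : ι → ℝ} (ht : ∀ i, t i ∈ s) :
    ∑ j, φ (∑ i, ‖u j i‖ ^ 2 * t i) ≤ ∑ i, φ (t i) := by
  classical
  have h_row (j : κ) : ∑ i, ‖u j i‖ ^ 2 = 1 := by
    rw [← EuclideanSpace.norm_sq_eq, hu.1 j, one_pow]
  have h_col (i : ι) : ∑ j, ‖u j i‖ ^ 2 ≤ 1 := by
    simpa [EuclideanSpace.inner_single_right] using
      hu.sum_inner_products_le (s := Finset.univ) (EuclideanSpace.single i (1 : 𝕜))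
  calc ∑ j, φ (∑ i, ‖u j i‖ ^ 2 * t i)
      ≤ ∑ j, ∑ i, ‖u j i‖ ^ 2 * φ (t i) := Finset.sum_le_sum fun j _ =>
        hφ.map_sum_le (fun _ _ => sq_nonneg _) (h_row j) fun i _ => ht i
    _ = ∑ i, (∑ j, ‖u j i‖ ^ 2) * φ (t i) := by
        rw [Finset.sum_comm]
        simp only [Finset.sum_mul]
    _ ≤ ∑ i, φ (t i) := Finset.sum_le_sum fun i _ =>
        mul_le_of_le_one_left (hφ_nonneg _ (ht i)) (h_col i)

section RootSums

open ComplexConjugate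

variable {ι : Type*} [Fintype ι]

lemma sum_mul_div_mul_eq_zero_of_sum_div_sq_eq {K : Type*} [Field K] {a t : ι → K} {z w : K}
    (hzw : z ≠ w) (hz : ∀ i, z + t i ≠ 0) (hw : ∀ i, w + t i ≠ 0)
    (h : ∑ i, a i / (z + t i) ^ 2 = ∑ i, a i / (w + t i) ^ 2) :
    ∑ i, a i * (2 * t i + z + w) / ((z + t i) ^ 2 * (w + t i) ^ 2) = 0 := by
  have h_term (i : ι) : (w - z) * (a i * (2 * t i + z + w) / ((z + t i) ^ 2 * (w + t i) ^ 2))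
      = a i / (z + t i) ^ 2 - a i / (w + t i) ^ 2 := by
    have := hz i
    have := hw i
    field_simp
    ring
  refine (mul_eq_zero.1 ?_).resolve_left (sub_ne_zero.2 hzw.symm)
  rw [Finset.mul_sum, Finset.sum_congr rfl fun i _ => h_term i, Finset.sum_sub_distrib, h, sub_self]

lemma add_ofReal_ne_zero_of_ne_conj {z : ℂ} (hz : z ≠ conj z) (r : ℝ) : z + r ≠ 0 := by
  intro h
  refine hz (Complex.conj_eq_iff_real.2 ⟨-r, ?_⟩).symm
  rw [eq_neg_of_add_eq_zero_left h, Complex.ofReal_neg]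

variable {t a : ι → ℝ} {c : ℝ}

lemma exists_orthonormal_sum_norm_sq_mul_eq_neg_re (ha : ∀ i, 0 ≤ a i) (hc : c ≠ 0) {m : ℕ}
    {ζ : Fin m → ℂ} (hζ : Function.Injective ζ) (h_conj : ∀ i j, ζ i ≠ conj (ζ j))
    (h_root : ∀ j, ∑ i, (a i : ℂ) / (ζ j + t i) ^ 2 = -c) :
    ∃ u : Fin m → EuclideanSpace ℂ ι, Orthonormal ℂ u ∧
      ∀ j, ∑ i, ‖u j i‖ ^ 2 * t i = -(ζ j).re := by
  classical
  let A := Matrix.toLpLin 2 2 (Matrix.diagonal fun i => (t i : ℂ))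
  let x (j : Fin m) : EuclideanSpace ℂ ι := WithLp.toLp 2 fun i => √(a i) / (ζ j + t i) ^ 2
  have hA (v : EuclideanSpace ℂ ι) (i : ι) : A v i = t i * v i := by
    simp [A, Matrix.toLpLin_apply, Matrix.mulVec_diagonal]
  have h_sqrt (i : ι) : (√(a i) : ℂ) * √(a i) = a i := by
    rw [← Complex.ofReal_mul, Real.mul_self_sqrt (ha i)]
  have hx (j : Fin m) : x j ≠ 0 := by
    intro h_zero
    have h_term (i : ι) : (a i : ℂ) / (ζ j + t i) ^ 2 = 0 := by
      rw [← h_sqrt, mul_div_assoc, show √(a i) / (ζ j + t i) ^ 2 = x j i from rfl, h_zero,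
        PiLp.zero_apply, mul_zero]
    simpa [h_term, hc] using h_root j
  have h_lyapunov (i j : Fin m) :
      2 * inner ℂ (x j) (A (x i)) + (ζ i + conj (ζ j)) * inner ℂ (x j) (x i) = 0 := by
    have h_root_conj : ∑ k, (a k : ℂ) / (conj (ζ j) + t k) ^ 2 = -c := by
      simpa using congrArg conj (h_root j)
    rw [← sum_mul_div_mul_eq_zero_of_sum_div_sq_eq (h_conj i j)
      (fun k => add_ofReal_ne_zero_of_ne_conj (h_conj i i) (t k))
      (fun k => add_ofReal_ne_zero_of_ne_conj (by simpa using (h_conj j j).symm) (t k))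
      ((h_root i).trans h_root_conj.symm)]
    simp only [PiLp.inner_apply, RCLike.inner_apply, hA, Finset.mul_sum, ← Finset.sum_add_distrib]
    refine Finset.sum_congr rfl fun k _ => ?_
    simp only [x, map_div₀, map_pow, map_add, Complex.conj_ofReal, ← h_sqrt k]
    simp only [div_eq_mul_inv, mul_inv]
    ring
  obtain ⟨u, hu, hu_re⟩ := exists_orthonormal_re_inner_eq_neg_re hζ hx h_lyapunov
  refine ⟨u, hu, fun j => ?_⟩
  rw [← RCLike.re_eq_complex_re, ← hu_re j, PiLp.inner_apply, map_sum]
  refine Finset.sum_congr rfl fun i _ => ?_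
  rw [hA, RCLike.inner_apply, mul_assoc, RCLike.mul_conj]
  simp [← Complex.ofReal_pow, mul_comm]

lemma re_inv_pow_le {z : ℂ} (hz : 0 < z.re) (n : ℕ) : (z ^ n)⁻¹.re ≤ (z.re ^ n)⁻¹ :=
  calc (z ^ n)⁻¹.re ≤ ‖(z ^ n)⁻¹‖ := Complex.re_le_norm _
    _ = (‖z‖ ^ n)⁻¹ := by rw [norm_inv, norm_pow]
    _ ≤ (z.re ^ n)⁻¹ := by gcongr; exact Complex.re_le_norm z

lemma sum_re_inv_sub_pow_le (ha : ∀ i, 0 ≤ a i) (hc : c ≠ 0) {Z : Finset ℂ}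
    (h_conj : ∀ z ∈ Z, ∀ w ∈ Z, z ≠ conj w)
    (h_root : ∀ z ∈ Z, ∑ i, (a i : ℂ) / (z + t i) ^ 2 = -c) {x : ℝ} (hx : ∀ i, 0 < x + t i)
    (n : ℕ) : ∑ z ∈ Z, ((x - z) ^ n)⁻¹.re ≤ ∑ i, ((x + t i) ^ n)⁻¹ := by
  let e := Z.equivFin.symm
  obtain ⟨u, hu, hu_re⟩ := exists_orthonormal_sum_norm_sq_mul_eq_neg_re (t := t) ha hc
    (ζ := fun j => e j) (Subtype.val_injective.comp e.injective)
    (fun i j => h_conj _ (e i).2 _ (e j).2) (fun j => h_root _ (e j).2)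
  have hφ : ConvexOn ℝ {y | 0 < x + y} fun y => ((x + y) ^ n)⁻¹ := by
    simpa only [Function.comp_def, zpow_neg, zpow_natCast] using!
      (convexOn_zpow (-n : ℤ)).translate_right x
  have h_mem (j : Fin Z.card) : ∑ i, ‖u j i‖ ^ 2 * t i ∈ {y | 0 < x + y} :=
    hφ.1.sum_mem (fun _ _ => sq_nonneg _)
      (by rw [← EuclideanSpace.norm_sq_eq, hu.1 j, one_pow]) fun i _ => hx i
  calc ∑ z ∈ Z, ((x - z) ^ n)⁻¹.re
      = ∑ j, ((x - e j : ℂ) ^ n)⁻¹.re := by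
        rw [← Finset.sum_coe_sort, ← e.sum_comp]
    _ ≤ ∑ j, ((x + ∑ i, ‖u j i‖ ^ 2 * t i) ^ n)⁻¹ := Finset.sum_le_sum fun j _ => by
        have h_re : (x - e j : ℂ).re = x + ∑ i, ‖u j i‖ ^ 2 * t i := by
          rw [hu_re, Complex.sub_re, Complex.ofReal_re, sub_eq_add_neg]
        rw [← h_re]
        exact re_inv_pow_le (h_re ▸ h_mem j) n
    _ ≤ ∑ i, ((x + t i) ^ n)⁻¹ := sum_convexOn_sum_norm_sq_le hu hφ
        (fun y hy => (inv_pos.2 (pow_pos hy n)).le) hx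

end RootSums

section PartialFractions

open Polynomial

/-- At a multiple root `z` of `c * p + q` the Wronskian of `p` and `q` vanishes, and `c` is
determined by `z`. -/
lemma finite_setOf_not_nodup_roots_C_mul_add {K : Type*} [Field K] [CharZero K] {p q : K[X]}
    (hpq : IsCoprime p q) : {c : K | ¬(C c * p + q).roots.Nodup}.Finite := by
  classical
  by_cases hW : wronskian p q = 0
  · obtain ⟨hp, hq⟩ := hpq.wronskian_eq_zero_iff.1 hW
    refine Set.finite_empty.subset fun c hc => hc ?_
    have h_deriv : derivative (C c * p + q) = 0 := by simp [hp, hq]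
    rw [eq_C_of_derivative_eq_zero h_deriv, roots_C]
    exact Multiset.nodup_zero
  · refine ((wronskian p q).roots.toFinset.image fun z => -q.eval z / p.eval z).finite_toSet.subset
      fun c hc => ?_
    obtain ⟨z, hz⟩ : ∃ z, 1 < (C c * p + q).roots.count z := by
      simpa [Multiset.nodup_iff_count_le_one] using hc
    have h_ne : C c * p + q ≠ 0 := fun h => by simp [h] at hz
    rw [count_roots, one_lt_rootMultiplicity_iff_isRoot h_ne] at hz
    obtain ⟨h_root, h_deriv⟩ : c * p.eval z + q.eval z = 0 ∧
        c * (derivative p).eval z + (derivative q).eval z = 0 := by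
      simpa [IsRoot] using hz
    have hpz : p.eval z ≠ 0 := fun hpz => by
      obtain ⟨r, s, hrs⟩ := hpq
      have hqz : q.eval z = 0 := by simpa [hpz] using h_root
      simpa [hpz, hqz] using congrArg (eval z) hrs
    refine Finset.mem_coe.2 (Finset.mem_image.2 ⟨z, ?_, ?_⟩)
    · rw [Multiset.mem_toFinset, mem_roots hW, IsRoot, wronskian, eval_sub, eval_mul, eval_mul]
      linear_combination p.eval z * h_deriv - (derivative p).eval z * h_root
    · rw [div_eq_iff hpz]
      linear_combination -h_root

variable {K ι : Type*} [Field K] [Fintype ι]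

/-- The common denominator of the fractions `a i / (z + t i) ^ 2`. -/
noncomputable def commonDenom (t : ι → K) : K[X] := ∏ i, (X + C (t i)) ^ 2

/-- The numerator of `∑ i, a i / (z + t i) ^ 2` over the denominator `commonDenom t`. -/
noncomputable def commonNum [DecidableEq ι] (a t : ι → K) : K[X] :=
  ∑ i, C (a i) * ∏ k ∈ Finset.univ.erase i, (X + C (t k)) ^ 2

/-- The numerator of `∑ i, a i / (z + t i) ^ 2 + c` over the denominator `commonDenom t`. -/
noncomputable def shiftedNum [DecidableEq ι] (a t : ι → K) (c : K) : K[X] :=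
  C c * commonDenom t + commonNum a t

lemma eval_commonDenom (t : ι → K) (z : K) : (commonDenom t).eval z = ∏ i, (z + t i) ^ 2 := by
  simp [commonDenom, eval_prod]

lemma eval_commonDenom_eq_zero_iff {t : ι → K} {z : K} :
    (commonDenom t).eval z = 0 ↔ ∃ i, z + t i = 0 := by
  simp [eval_commonDenom, Finset.prod_eq_zero_iff]

variable [DecidableEq ι] {a t : ι → K} {z : K}

lemma eval_commonNum (hz : ∀ i, z + t i ≠ 0) :
    (commonNum a t).eval z = (∑ i, a i / (z + t i) ^ 2) * (commonDenom t).eval z := by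
  rw [eval_commonDenom, commonNum, eval_finsetSum, Finset.sum_mul]
  refine Finset.sum_congr rfl fun i _ => ?_
  rw [← Finset.mul_prod_erase Finset.univ _ (Finset.mem_univ i), ← mul_assoc,
    div_mul_cancel₀ _ (pow_ne_zero 2 (hz i))]
  simp [eval_prod]

lemma eval_commonNum_ne_zero (ht : Function.Injective t) (ha : ∀ i, a i ≠ 0) {i : ι}
    (hz : z + t i = 0) : (commonNum a t).eval z ≠ 0 := by
  have h_others : ∀ k ≠ i, z + t k ≠ 0 := fun k hk h => hk (ht (add_left_cancel (h.trans hz.symm)))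
  have h_eval : (commonNum a t).eval z = a i * ∏ k ∈ Finset.univ.erase i, (z + t k) ^ 2 := by
    rw [commonNum, eval_finsetSum, Finset.sum_eq_single_of_mem i (Finset.mem_univ i)]
    · simp [eval_prod]
    · intro k _ hk
      simp only [eval_mul, eval_C, eval_prod, eval_pow, eval_add, eval_X]
      rw [Finset.prod_eq_zero (Finset.mem_erase.2 ⟨hk.symm, Finset.mem_univ i⟩) (by simp [hz]),
        mul_zero]
  rw [h_eval]
  exact mul_ne_zero (ha i) (Finset.prod_ne_zero_iff.2 fun k hk =>
    pow_ne_zero 2 (h_others k (Finset.ne_of_mem_erase hk)))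

lemma isCoprime_commonDenom_commonNum [IsAlgClosed K] (ht : Function.Injective t)
    (ha : ∀ i, a i ≠ 0) : IsCoprime (commonDenom t) (commonNum a t) := by
  rw [isCoprime_iff_aeval_ne_zero_of_isAlgClosed K K]
  intro z
  by_cases hz : ∃ i, z + t i = 0
  · obtain ⟨i, hi⟩ := hz
    exact .inr (by simpa using eval_commonNum_ne_zero ht ha hi)
  · exact .inl (by simpa using mt eval_commonDenom_eq_zero_iff.1 hz)

lemma eval_shiftedNum (hz : ∀ i, z + t i ≠ 0) (c : K) :
    (shiftedNum a t c).eval z = (∑ i, a i / (z + t i) ^ 2 + c) * (commonDenom t).eval z := by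
  rw [shiftedNum, eval_add, eval_mul, eval_C, eval_commonNum hz]
  ring

lemma sum_div_sq_eq_neg_of_eval_shiftedNum_eq_zero (ht : Function.Injective t)
    (ha : ∀ i, a i ≠ 0) {c : K} (hz : (shiftedNum a t c).eval z = 0) :
    ∑ i, a i / (z + t i) ^ 2 = -c := by
  have h_pole (i : ι) : z + t i ≠ 0 := fun hi => by
    rw [shiftedNum, eval_add, eval_mul, eval_commonDenom_eq_zero_iff.2 ⟨i, hi⟩, mul_zero,
      zero_add] at hz
    exact eval_commonNum_ne_zero ht ha hi hz
  rw [eval_shiftedNum h_pole, mul_eq_zero,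
    or_iff_left (by simpa [eval_commonDenom_eq_zero_iff] using h_pole)] at hz
  exact eq_neg_of_add_eq_zero_left hz

lemma finite_setOf_not_nodup_roots_shiftedNum [IsAlgClosed K] [CharZero K]
    (ht : Function.Injective t) (ha : ∀ i, a i ≠ 0) :
    {c : K | ¬(shiftedNum a t c).roots.Nodup}.Finite :=
  finite_setOf_not_nodup_roots_C_mul_add (isCoprime_commonDenom_commonNum ht ha)

end PartialFractions

section LogDerivPartialFractions

open Polynomial

variable {ι : Type*} [Fintype ι]

lemma logDeriv_eval_commonDenom {𝕜 : Type*} [NontriviallyNormedField 𝕜] {t : ι → 𝕜} {z : 𝕜}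
    (hz : ∀ i, z + t i ≠ 0) :
    logDeriv (fun y => (commonDenom t).eval y) z = ∑ i, 2 / (z + t i) := by
  simp only [eval_commonDenom]
  rw [logDeriv_prod (f := fun i y => (y + t i) ^ 2) (fun i _ => pow_ne_zero 2 (hz i))
    fun i _ => by fun_prop]
  refine Finset.sum_congr rfl fun i _ => ?_
  rw [logDeriv_fun_pow (by fun_prop), logDeriv_apply, deriv_add_const', deriv_id'', Nat.cast_ofNat,
    mul_one_div]

lemma logDeriv_sum_div_sq_add {𝕜 : Type*} [NontriviallyNormedField 𝕜] [IsAlgClosed 𝕜]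
    [DecidableEq ι] {a t : ι → 𝕜} {c z : 𝕜} (hz : ∀ i, z + t i ≠ 0)
    (h_ne : ∑ i, a i / (z + t i) ^ 2 + c ≠ 0) :
    logDeriv (fun y => ∑ i, a i / (y + t i) ^ 2 + c) z
      = ((shiftedNum a t c).roots.map fun w => 1 / (z - w)).sum
        - ∑ i, 2 / (z + t i) := by
  set p := shiftedNum a t c
  have h_denom : (commonDenom t).eval z ≠ 0 := by simpa [eval_commonDenom_eq_zero_iff] using hz
  have hpz : p.eval z ≠ 0 := by
    rw [eval_shiftedNum hz]
    exact mul_ne_zero h_ne h_denom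
  have h_near : (fun y => ∑ i, a i / (y + t i) ^ 2 + c)
      =ᶠ[nhds z] fun y => p.eval y / (commonDenom t).eval y := by
    filter_upwards [(commonDenom t).continuous.continuousAt.eventually_ne h_denom] with y hy
    have hy' : ∀ i, y + t i ≠ 0 := by simpa [eval_commonDenom_eq_zero_iff] using hy
    rw [eval_shiftedNum hy', mul_div_cancel_right₀ _ hy]
  rw [logDeriv_apply, h_near.deriv_eq, h_near.eq_of_nhds, ← logDeriv_apply,
    logDeriv_div z hpz h_denom p.differentiableAt (commonDenom t).differentiableAt,
    logDeriv_eval_commonDenom hz, logDeriv_apply, Polynomial.deriv,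
    (IsAlgClosed.splits p).eval_derivative_div_eval_of_ne_zero hpz]

end LogDerivPartialFractions

lemma hasDerivAt_inv_add_pow {𝕜 : Type*} [NontriviallyNormedField 𝕜] {x s : 𝕜} (hx : x + s ≠ 0)
    (n : ℕ) :
    HasDerivAt (fun y => ((y + s) ^ n)⁻¹) (-n * ((x + s) ^ (n + 1))⁻¹) x := by
  have h_zpow : HasDerivAt (fun y => (y + s) ^ (-n : ℤ)) (-n * (x + s) ^ (-n - 1 : ℤ)) x := by
    simpa using (hasDerivAt_zpow (-n) (x + s) (.inl hx)).comp_add_const x s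
  convert h_zpow using 2
  · rw [zpow_neg, zpow_natCast]
  · rw [← neg_add', zpow_neg, ← Nat.cast_succ, zpow_natCast]

lemma hasDerivAt_re_inv_sub_pow {x : ℝ} {z : ℂ} (hx : (x : ℂ) - z ≠ 0) (n : ℕ) :
    HasDerivAt (fun y : ℝ => ((y - z : ℂ) ^ n)⁻¹.re) (-n * ((x - z : ℂ) ^ (n + 1))⁻¹.re) x := by
  rw [sub_eq_add_neg] at hx
  simpa [sub_eq_add_neg, -inv_pow] using (hasDerivAt_inv_add_pow hx n).real_of_complex

lemma ofReal_logDeriv_eq {f : ℝ → ℝ} {g : ℂ → ℂ} (hfg : ∀ y : ℝ, g y = f y) {x : ℝ}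
    (hg : DifferentiableAt ℂ g x) : ((logDeriv f x : ℝ) : ℂ) = logDeriv g x := by
  have h_re : HasDerivAt f (deriv g x).re x := by
    simpa [hfg] using hg.hasDerivAt.real_of_complex
  have h_complex : HasDerivAt (fun y : ℝ => (f y : ℂ)) (deriv g x) x := by
    simpa only [hfg] using hg.hasDerivAt.comp_ofReal
  rw [logDeriv_apply, logDeriv_apply, Complex.ofReal_div, hfg, h_re.deriv,
    h_re.ofReal_comp.unique h_complex]

section FiniteSums

open ComplexConjugate

variable {ι : Type*} [Fintype ι] {t a : ι → ℝ} {c : ℝ}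

lemma completelyMonotonic_sum_inv_sub_sum_re_inv (ht : ∀ i, 0 ≤ t i) {Z : Finset ℂ}
    (hZ : ∀ z ∈ Z, z.im ≠ 0)
    (h_le : ∀ (n : ℕ) (x : ℝ), 0 < x →
      ∑ z ∈ Z, ((x - z) ^ n)⁻¹.re ≤ 2 * ∑ i, ((x + t i) ^ n)⁻¹) :
    CompletelyMonotonic fun x => 2 * ∑ i, (x + t i)⁻¹ - ∑ z ∈ Z, (x - z)⁻¹.re := by
  let D (n : ℕ) (x : ℝ) : ℝ := 2 * ∑ i, ((x + t i) ^ n)⁻¹ - ∑ z ∈ Z, ((x - z) ^ n)⁻¹.re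
  have hD (n : ℕ) (x : ℝ) (hx : 0 < x) : HasDerivAt (D n) (-n * D (n + 1) x) x := by
    have h_poles := HasDerivAt.fun_sum (u := Finset.univ) fun i _ =>
      hasDerivAt_inv_add_pow (add_pos_of_pos_of_nonneg hx (ht i)).ne' n
    have h_roots := HasDerivAt.fun_sum (u := Z) fun z hz =>
      hasDerivAt_re_inv_sub_pow (x := x)
        (fun h => hZ z hz (by simpa using congrArg Complex.im h)) n
    refine ((h_poles.const_mul 2).sub h_roots).congr_deriv ?_
    simp only [D, ← Finset.mul_sum]
    ring
  refine completelyMonotonic_congr (fun x _ => by simp [D]) (completelyMonotonic_of_hasDerivAt_chain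
    (J := fun n x => (-1) ^ n * n.factorial * D (n + 1) x) (fun n x hx => ?_) fun n x hx => ?_)
  · refine ((hD (n + 1) x hx).const_mul _).congr_deriv ?_
    rw [Nat.factorial_succ, Nat.cast_mul]
    ring
  · rw [← mul_assoc, ← mul_assoc, ← mul_pow, neg_mul_neg, one_mul, one_pow, one_mul]
    exact mul_nonneg (Nat.cast_nonneg _) (sub_nonneg.2 (h_le (n + 1) x hx))

lemma im_ne_zero_of_sum_div_sq_eq_neg (ha : ∀ i, 0 ≤ a i) (hc : 0 < c) {z : ℂ}
    (hz : ∑ i, (a i : ℂ) / (z + t i) ^ 2 = -c) : z.im ≠ 0 := by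
  intro h_im
  rw [← Complex.re_add_im z, h_im, Complex.ofReal_zero, zero_mul, add_zero] at hz
  have h_real : ∑ i, a i / (z.re + t i) ^ 2 = -c := by exact_mod_cast hz
  have : 0 ≤ ∑ i, a i / (z.re + t i) ^ 2 :=
    Finset.sum_nonneg fun i _ => div_nonneg (ha i) (sq_nonneg _)
  linarith

lemma sum_re_inv_sub_pow_le_two_mul (ha : ∀ i, 0 ≤ a i) (hc : 0 < c) {Z : Finset ℂ}
    (h_root : ∀ z ∈ Z, ∑ i, (a i : ℂ) / (z + t i) ^ 2 = -c) {x : ℝ} (hx : ∀ i, 0 < x + t i)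
    (n : ℕ) : ∑ z ∈ Z, ((x - z) ^ n)⁻¹.re ≤ 2 * ∑ i, ((x + t i) ^ n)⁻¹ := by
  have h_upper := sum_re_inv_sub_pow_le (Z := Z.filter (0 < ·.im)) ha hc.ne'
    (fun z hz w hw h => by
      have hz_im := (Finset.mem_filter.1 hz).2
      have hw_im := (Finset.mem_filter.1 hw).2
      rw [h, Complex.conj_im] at hz_im
      linarith)
    (fun z hz => h_root z (Finset.mem_filter.1 hz).1) hx n
  have h_lower := sum_re_inv_sub_pow_le (Z := Z.filter (¬0 < ·.im)) ha hc.ne'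
    (fun z hz w hw h => by
      have hz_im := (Finset.mem_filter.1 hz).2
      have hw_im := (Finset.mem_filter.1 hw).2
      rw [h, Complex.conj_im] at hz_im
      have := im_ne_zero_of_sum_div_sq_eq_neg ha hc (h_root w (Finset.mem_filter.1 hw).1)
      exact this (by linarith))
    (fun z hz => h_root z (Finset.mem_filter.1 hz).1) hx n
  rw [← Finset.sum_filter_add_sum_filter_not Z (0 < ·.im)]
  linarith

lemma neg_logDeriv_sum_div_sq_add [DecidableEq ι] {x : ℝ} (hx : ∀ i, x + t i ≠ 0)
    (h_ne : ∑ i, a i / (x + t i) ^ 2 + c ≠ 0)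
    (h_nodup : (shiftedNum (fun i => (a i : ℂ)) (fun i => t i) c).roots.Nodup) :
    -logDeriv (fun x => ∑ i, a i / (x + t i) ^ 2 + c) x = 2 * ∑ i, (x + t i)⁻¹
      - ∑ z ∈ (shiftedNum (fun i => (a i : ℂ)) (fun i => t i) c).roots.toFinset, (x - z)⁻¹.re := by
  have hx' (i : ι) : (x : ℂ) + t i ≠ 0 := mod_cast hx i
  have h_complex := ofReal_logDeriv_eq (f := fun x => ∑ i, a i / (x + t i) ^ 2 + c)
    (g := fun z => ∑ i, (a i : ℂ) / (z + t i) ^ 2 + c) (fun y => by push_cast; rfl) (x := x)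
    (by fun_prop (disch := exact pow_ne_zero 2 (hx' _)))
  rw [logDeriv_sum_div_sq_add hx' (mod_cast h_ne)] at h_complex
  have h_re := congrArg Complex.re h_complex
  have h_pole (i : ι) : (2 / ((x : ℂ) + t i)).re = 2 * (x + t i)⁻¹ := by
    rw [← Complex.ofReal_re (2 * (x + t i)⁻¹), div_eq_mul_inv]
    push_cast
    rfl
  simp only [Complex.ofReal_re, Complex.sub_re, Complex.re_sum, h_pole, ← Finset.mul_sum,
    one_div] at h_re
  rw [h_re, neg_sub, ← Complex.re_sum, Finset.sum_eq_multiset_sum _ fun z : ℂ => ((x : ℂ) - z)⁻¹,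
    Multiset.toFinset_val, Multiset.dedup_eq_self.2 h_nodup]

lemma logCompletelyMonotonic_sum_div_sq_add_of_nodup_roots [DecidableEq ι]
    (ht : ∀ i, 0 ≤ t i) (ht_inj : Function.Injective t) (ha : ∀ i, 0 < a i) (hc : 0 < c)
    (h_nodup : (shiftedNum (fun i => (a i : ℂ)) (fun i => t i) c).roots.Nodup) :
    LogCompletelyMonotonic fun x => ∑ i, a i / (x + t i) ^ 2 + c := by
  have h_add_pos {x : ℝ} (hx : 0 < x) (i : ι) : 0 < x + t i := add_pos_of_pos_of_nonneg hx (ht i)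
  have h_pos (x : ℝ) : 0 < ∑ i, a i / (x + t i) ^ 2 + c :=
    add_pos_of_nonneg_of_pos (Finset.sum_nonneg fun i _ => div_nonneg (ha i).le (sq_nonneg _)) hc
  have h_root : ∀ z ∈ (shiftedNum (fun i => (a i : ℂ)) (fun i => t i) c).roots.toFinset,
      ∑ i, (a i : ℂ) / (z + t i) ^ 2 = -c := fun z hz =>
    sum_div_sq_eq_neg_of_eval_shiftedNum_eq_zero (Complex.ofReal_injective.comp ht_inj)
      (fun i => Complex.ofReal_ne_zero.2 (ha i).ne')
      (Polynomial.isRoot_of_mem_roots (Multiset.mem_toFinset.1 hz))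
  refine ⟨fun x _ => h_pos x, fun x hx => ?_, ?_⟩
  · fun_prop (disch := exact pow_ne_zero 2 (h_add_pos hx _).ne')
  rw [neg_deriv_div_eq_neg_logDeriv]
  refine completelyMonotonic_congr (fun x hx => neg_logDeriv_sum_div_sq_add
    (fun i => (h_add_pos hx i).ne') (h_pos x).ne' h_nodup) ?_
  exact completelyMonotonic_sum_inv_sub_sum_re_inv ht
    (fun z hz => im_ne_zero_of_sum_div_sq_eq_neg (fun i => (ha i).le) hc (h_root z hz))
    fun n x hx => sum_re_inv_sub_pow_le_two_mul (fun i => (ha i).le) hc h_root (h_add_pos hx) n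

lemma eventually_logCompletelyMonotonic_sum_div_sq_add (ht : ∀ i, 0 ≤ t i)
    (ht_inj : Function.Injective t) (ha : ∀ i, 0 < a i) (hc : 0 ≤ c) :
    ∀ᶠ b in nhdsWithin c (Ioi c), LogCompletelyMonotonic fun x => ∑ i, a i / (x + t i) ^ 2 + b := by
  classical
  have h_finite := finite_setOf_not_nodup_roots_shiftedNum (a := fun i => (a i : ℂ))
    (Complex.ofReal_injective.comp ht_inj) fun i => Complex.ofReal_ne_zero.2 (ha i).ne'
  have h_nodup := (nhdsGT_le_nhdsNE c).trans (nhdsNE_le_cofinite c)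
    (h_finite.preimage Complex.ofReal_injective.injOn).compl_mem_cofinite
  filter_upwards [self_mem_nhdsWithin, h_nodup] with b hcb hb
  exact logCompletelyMonotonic_sum_div_sq_add_of_nodup_roots ht ht_inj ha (hc.trans_lt hcb)
    (not_not.1 hb)

end FiniteSums

/-- The generalized Stieltjes transform `x ↦ ∫ (x + t)⁻ᵐ dμ(t)` of natural order `m`. -/
noncomputable def stieltjesTransform (m : ℕ) (μ : Measure ℝ) (x : ℝ) : ℝ :=
  ∫ t, ((x + t) ^ m)⁻¹ ∂μ

/-- `μ` is carried by `[0,∞)` and its generalized Stieltjes transform of order `m` converges on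
`(0,∞)`. -/
structure IsStieltjesMeasure (m : ℕ) (μ : Measure ℝ) : Prop where
  ae_nonneg : ∀ᵐ t ∂μ, 0 ≤ t
  integrable_inv_add_pow : ∀ x, 0 < x → Integrable (fun t => ((x + t) ^ m)⁻¹) μ

section StieltjesTransform

variable {m : ℕ} {μ : Measure ℝ} {x : ℝ}

lemma isStieltjesMeasure_of_isFiniteMeasure [IsFiniteMeasure μ] (h_nonneg : ∀ᵐ t ∂μ, 0 ≤ t)
    (m : ℕ) : IsStieltjesMeasure m μ := by
  refine ⟨h_nonneg, fun x hx => .of_bound (by fun_prop) (x ^ m)⁻¹ ?_⟩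
  filter_upwards [h_nonneg] with t ht
  rw [Real.norm_of_nonneg (by positivity)]
  gcongr
  exact le_add_of_nonneg_right ht

namespace IsStieltjesMeasure

lemma mono {ν : Measure ℝ} (hμ : IsStieltjesMeasure m μ) (hνμ : ν ≤ μ) : IsStieltjesMeasure m ν :=
  ⟨ae_mono hνμ hμ.ae_nonneg, fun x hx => (hμ.integrable_inv_add_pow x hx).mono_measure hνμ⟩

lemma succ (hμ : IsStieltjesMeasure m μ) : IsStieltjesMeasure (m + 1) μ := by
  refine ⟨hμ.ae_nonneg, fun x hx => ?_⟩
  simp only [pow_succ, mul_inv]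
  refine (hμ.integrable_inv_add_pow x hx).mul_bdd (c := x⁻¹) (by fun_prop) ?_
  filter_upwards [hμ.ae_nonneg] with t ht
  rw [Real.norm_of_nonneg (by positivity)]
  gcongr
  exact le_add_of_nonneg_right ht

lemma add_right (hμ : IsStieltjesMeasure m μ) (n : ℕ) : IsStieltjesMeasure (m + n) μ :=
  n.rec hμ fun _ => succ

lemma measure_Iic_lt_top (hμ : IsStieltjesMeasure m μ) (b : ℝ) : μ (Iic b) < ⊤ := by
  have h_pos : 0 < ((1 + |b|) ^ m)⁻¹ := by positivity
  refine (measure_mono_ae ?_).trans_lt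
    ((hμ.integrable_inv_add_pow 1 one_pos).measure_ge_lt_top h_pos)
  filter_upwards [hμ.ae_nonneg] with t ht htb
  change ((1 + |b|) ^ m)⁻¹ ≤ ((1 + t) ^ m)⁻¹
  gcongr
  exact le_trans htb (le_abs_self b)

lemma hasDerivAt_stieltjesTransform (hμ : IsStieltjesMeasure m μ) (hx : 0 < x) :
    HasDerivAt (stieltjesTransform m μ) (-m * stieltjesTransform (m + 1) μ x) x := by
  rw [stieltjesTransform, ← integral_const_mul]
  refine (hasDerivAt_integral_of_dominated_loc_of_deriv_le
    (F' := fun y t => -m * ((y + t) ^ (m + 1))⁻¹)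
    (bound := fun t => m * ((x / 2 + t) ^ (m + 1))⁻¹) (Ioi_mem_nhds (half_lt_self hx))
    (.of_forall fun y => by fun_prop) (hμ.integrable_inv_add_pow x hx) (by fun_prop) ?_
    ((hμ.succ.integrable_inv_add_pow _ (half_pos hx)).const_mul _) ?_).2
  · filter_upwards [hμ.ae_nonneg] with t ht y hy
    have hxy : x / 2 < y := hy
    have hyt : 0 < y + t := by linarith
    rw [neg_mul, norm_neg, Real.norm_of_nonneg (by positivity)]
    gcongr
  · filter_upwards [hμ.ae_nonneg] with t ht y hy
    have hxy : x / 2 < y := hy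
    exact hasDerivAt_inv_add_pow (by linarith) m

lemma hasDerivAt_ascFactorial_mul_stieltjesTransform (hμ : IsStieltjesMeasure m μ) (n : ℕ)
    (hx : 0 < x) :
    HasDerivAt (fun y => (-1) ^ n * m.ascFactorial n * stieltjesTransform (m + n) μ y)
      ((-1) ^ (n + 1) * m.ascFactorial (n + 1) * stieltjesTransform (m + (n + 1)) μ x) x := by
  refine (((hμ.add_right n).hasDerivAt_stieltjesTransform hx).const_mul _).congr_deriv ?_
  rw [Nat.ascFactorial_succ, ← add_assoc, pow_succ]
  push_cast
  ring

lemma iteratedDeriv_stieltjesTransform (hμ : IsStieltjesMeasure m μ) (n : ℕ) (hx : 0 < x) :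
    iteratedDeriv n (stieltjesTransform m μ) x
      = (-1) ^ n * m.ascFactorial n * stieltjesTransform (m + n) μ x := by
  rw [← iteratedDeriv_eq_of_hasDerivAt_chain isOpen_Ioi
    (fun k _ hy => hμ.hasDerivAt_ascFactorial_mul_stieltjesTransform k hy) n hx]
  simp

lemma contDiffAt_stieltjesTransform (hμ : IsStieltjesMeasure m μ) (hx : 0 < x) :
    ContDiffAt ℝ (⊤ : ℕ∞) (stieltjesTransform m μ) x := by
  simpa using contDiffAt_of_hasDerivAt_chain isOpen_Ioi
    (fun k _ hy => hμ.hasDerivAt_ascFactorial_mul_stieltjesTransform k hy) hx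

end IsStieltjesMeasure

lemma logCompletelyMonotonic_stieltjesTransform_add_of_tendsto {κ : Type*} {l : Filter κ}
    [l.NeBot] {ν : κ → Measure ℝ} {b : κ → ℝ} {c : ℝ}
    (h_lcm : ∀ᶠ k in l, LogCompletelyMonotonic fun x => stieltjesTransform m (ν k) x + b k)
    (hν : ∀ k, IsStieltjesMeasure m (ν k)) (hμ : IsStieltjesMeasure m μ)
    (h_pos : ∀ x, 0 < x → 0 < stieltjesTransform m μ x + c)
    (h_lim : ∀ n x, 0 < x → Tendsto (fun k => stieltjesTransform (m + n) (ν k) x) l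
      (nhds (stieltjesTransform (m + n) μ x)))
    (hb : Tendsto b l (nhds c)) :
    LogCompletelyMonotonic fun x => stieltjesTransform m μ x + c := by
  refine logCompletelyMonotonic_of_tendsto h_lcm h_pos
    (fun x hx => (hμ.contDiffAt_stieltjesTransform hx).add contDiffAt_const) fun n x hx => ?_
  cases n with
  | zero => simpa only [iteratedDeriv_zero, add_zero] using (h_lim 0 x hx).add hb
  | succ n =>
    simp only [add_comm _ (b _), add_comm _ c, iteratedDeriv_const_add n.succ_pos,
      (hν _).iteratedDeriv_stieltjesTransform _ hx, hμ.iteratedDeriv_stieltjesTransform _ hx]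
    exact (h_lim (n + 1) x hx).const_mul _

lemma stieltjesTransform_nonneg (hμ : ∀ᵐ t ∂μ, 0 ≤ t) (hx : 0 ≤ x) :
    0 ≤ stieltjesTransform m μ x := by
  refine integral_nonneg_of_ae ?_
  filter_upwards [hμ] with t ht
  positivity

lemma stieltjesTransform_map {φ : ℝ → ℝ} (hφ : Measurable φ) :
    stieltjesTransform m (μ.map φ) x = ∫ t, ((x + φ t) ^ m)⁻¹ ∂μ :=
  integral_map hφ.aemeasurable (by fun_prop)

lemma exists_stieltjesTransform_eq_sum [IsFiniteMeasure μ] (h_nonneg : ∀ᵐ t ∂μ, 0 ≤ t)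
    {s : Finset ℝ} (hs : ∀ᵐ t ∂μ, t ∈ s) :
    ∃ s' : Finset ℝ, (∀ t ∈ s', 0 ≤ t ∧ 0 < μ.real {t}) ∧
      ∀ m x, stieltjesTransform m μ x = ∑ t ∈ s', μ.real {t} / (x + t) ^ m := by
  refine ⟨s.filter fun t => μ.real {t} ≠ 0, fun t ht => ?_, fun m x => ?_⟩
  · have ht_mass := (Finset.mem_filter.1 ht).2
    refine ⟨?_, measureReal_nonneg.lt_of_ne' ht_mass⟩
    by_contra h_neg
    refine ht_mass ((measureReal_eq_zero_iff).2 (measure_mono_null ?_ (ae_iff.1 h_nonneg)))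
    exact singleton_subset_iff.2 h_neg
  · calc
      ∫ t, ((x + t) ^ m)⁻¹ ∂μ = ∫ t in s, ((x + t) ^ m)⁻¹ ∂μ := by
        rw [Measure.restrict_eq_self_of_ae_mem hs]
      _ = ∑ t ∈ s, μ.real {t} / (x + t) ^ m := by
        simp only [setIntegral_finset s (.of_finite s.finite_toSet), smul_eq_mul, div_eq_mul_inv]
      _ = _ := (Finset.sum_filter_of_ne fun t _ h => (div_ne_zero_iff.1 h).1).symm

lemma logCompletelyMonotonic_stieltjesTransform_two_of_finset [IsFiniteMeasure μ]
    (h_nonneg : ∀ᵐ t ∂μ, 0 ≤ t) {s : Finset ℝ} (hs : ∀ᵐ t ∂μ, t ∈ s) {c : ℝ} (hc : 0 < c) :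
    LogCompletelyMonotonic fun x => stieltjesTransform 2 μ x + c := by
  obtain ⟨s', hs', h_sum⟩ := exists_stieltjesTransform_eq_sum h_nonneg hs
  have hμ := isStieltjesMeasure_of_isFiniteMeasure h_nonneg 2
  refine logCompletelyMonotonic_stieltjesTransform_add_of_tendsto (l := nhdsWithin c (Ioi c))
    (ν := fun _ => μ) (b := id) ?_ (fun _ => hμ) hμ
    (fun x hx => add_pos_of_nonneg_of_pos (stieltjesTransform_nonneg h_nonneg hx.le) hc)
    (fun _ _ _ => tendsto_const_nhds) (tendsto_id.mono_left nhdsWithin_le_nhds)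
  simp only [h_sum, ← Finset.sum_coe_sort s', id]
  exact eventually_logCompletelyMonotonic_sum_div_sq_add (fun t => (hs' t t.2).1)
    Subtype.val_injective (fun t => (hs' t t.2).2) hc.le

lemma logCompletelyMonotonic_stieltjesTransform_two_of_isFiniteMeasure [IsFiniteMeasure μ]
    (h_nonneg : ∀ᵐ t ∂μ, 0 ≤ t) {c : ℝ} (hc : 0 < c) :
    LogCompletelyMonotonic fun x => stieltjesTransform 2 μ x + c := by
  let φ (N : ℕ) : SimpleFunc ℝ ℝ := SimpleFunc.approxOn id measurable_id (Ici 0) 0 self_mem_Ici N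
  have hφ_nonneg (N : ℕ) (t : ℝ) : 0 ≤ φ N t := SimpleFunc.approxOn_mem _ _ N t
  have hφ_lim (t : ℝ) (ht : 0 ≤ t) : Tendsto (fun N => φ N t) atTop (nhds t) :=
    SimpleFunc.tendsto_approxOn _ _ (subset_closure ht)
  have h_map_nonneg (N : ℕ) : ∀ᵐ t ∂μ.map (φ N), 0 ≤ t :=
    (ae_map_iff (φ N).aemeasurable measurableSet_Ici).2 (.of_forall (hφ_nonneg N))
  refine logCompletelyMonotonic_stieltjesTransform_add_of_tendsto (l := atTop)
    (ν := fun N => μ.map (φ N)) (b := fun _ => c) (.of_forall fun N => ?_)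
    (fun N => isStieltjesMeasure_of_isFiniteMeasure (h_map_nonneg N) 2)
    (isStieltjesMeasure_of_isFiniteMeasure h_nonneg 2)
    (fun x hx => add_pos_of_nonneg_of_pos (stieltjesTransform_nonneg h_nonneg hx.le) hc)
    (fun n x hx => ?_) tendsto_const_nhds
  · refine logCompletelyMonotonic_stieltjesTransform_two_of_finset (h_map_nonneg N)
      (s := (φ N).range) ?_ hc
    exact (ae_map_iff (φ N).aemeasurable (Finset.measurableSet _)).2
      (.of_forall fun t => (φ N).mem_range_self t)
  · simp only [stieltjesTransform_map (φ _).measurable]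
    refine tendsto_integral_of_dominated_convergence (fun _ => (x ^ (2 + n))⁻¹)
      (fun N => by fun_prop) (integrable_const _) (fun N => .of_forall fun t => ?_) ?_
    · rw [Real.norm_of_nonneg (by have := hφ_nonneg N t; positivity)]
      gcongr
      exact le_add_of_nonneg_right (hφ_nonneg N t)
    · filter_upwards [h_nonneg] with t ht
      exact (((hφ_lim t ht).const_add x).pow _).inv₀ (by positivity)

lemma IsStieltjesMeasure.logCompletelyMonotonic_stieltjesTransform_add
    (hμ : IsStieltjesMeasure 2 μ) {c : ℝ} (hc : 0 ≤ c)
    (h_pos : ∀ x, 0 < x → 0 < stieltjesTransform 2 μ x + c) :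
    LogCompletelyMonotonic fun x => stieltjesTransform 2 μ x + c := by
  refine logCompletelyMonotonic_stieltjesTransform_add_of_tendsto (l := atTop)
    (ν := fun N : ℕ => μ.restrict (Iic N)) (b := fun N : ℕ => c + 1 / (N + 1))
    (.of_forall fun N => ?_) (fun N => hμ.mono Measure.restrict_le_self) hμ h_pos
    (fun n x hx => ?_) ?_
  · have : IsFiniteMeasure (μ.restrict (Iic N)) := isFiniteMeasure_restrict.2
      (hμ.measure_Iic_lt_top N).ne
    exact logCompletelyMonotonic_stieltjesTransform_two_of_isFiniteMeasure
      (ae_restrict_of_ae hμ.ae_nonneg) (by positivity)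
  · exact (aecover_Iic tendsto_natCast_atTop_atTop).integral_tendsto_of_countably_generated
      ((hμ.add_right n).integrable_inv_add_pow x hx)
  · simpa using tendsto_const_nhds.add (tendsto_one_div_add_atTop_nhds_zero_nat (𝕜 := ℝ))

end StieltjesTransform

lemma logCompletelyMonotonic_congr {f g : ℝ → ℝ} (hfg : ∀ x, 0 < x → f x = g x)
    (hg : LogCompletelyMonotonic g) : LogCompletelyMonotonic f := by
  have h_near (x : ℝ) (hx : 0 < x) : f =ᶠ[nhds x] g :=
    eventually_of_mem (Ioi_mem_nhds hx) hfg
  refine ⟨fun x hx => hfg x hx ▸ hg.1 x hx,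
    fun x hx => (hg.2.1 x hx).congr_of_eventuallyEq (h_near x hx),
    completelyMonotonic_congr (fun x hx => ?_) hg.2.2⟩
  rw [(h_near x hx).deriv_eq, hfg x hx]

lemma rpow_neg_two (y : ℝ) : y ^ (-2 : ℝ) = (y ^ 2)⁻¹ := by
  rw [Real.rpow_neg_ofNat, zpow_neg, zpow_ofNat]

lemma isGenStieltjes_two_iff {f : ℝ → ℝ} :
    IsGenStieltjes 2 f ↔ ∃ (μ : Measure ℝ) (c : ℝ), 0 ≤ c ∧ IsStieltjesMeasure 2 μ ∧
      ∀ x, 0 < x → f x = stieltjesTransform 2 μ x + c := by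
  simp only [IsGenStieltjes, rpow_neg_two]
  constructor
  · rintro ⟨μ, c, hc, hμ, h⟩
    exact ⟨μ, c, hc, ⟨ae_iff.2 (by simpa only [not_le] using! hμ), fun x hx => (h x hx).1⟩,
      fun x hx => (h x hx).2⟩
  · rintro ⟨μ, c, hc, hμ, h⟩
    refine ⟨μ, c, hc, ?_, fun x hx => ⟨hμ.integrable_inv_add_pow x hx, h x hx⟩⟩
    simpa only [not_le] using! ae_iff.1 hμ.ae_nonneg

lemma IsGenStieltjes.logCompletelyMonotonic {f : ℝ → ℝ} (hf : IsGenStieltjes 2 f)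
    (h_pos : ∀ x, 0 < x → 0 < f x) : LogCompletelyMonotonic f := by
  obtain ⟨μ, c, hc, hμ, hfμ⟩ := isGenStieltjes_two_iff.1 hf
  exact logCompletelyMonotonic_congr hfμ
    (hμ.logCompletelyMonotonic_stieltjesTransform_add hc fun x hx => hfμ x hx ▸ h_pos x hx)

section LaplaceTransform

variable {f g : ℝ → ℝ} {x : ℝ}

lemma integrableOn_exp_mul_of_norm_le {C : ℝ} (hf : Measurable f) (hC : ∀ t, 0 < t → ‖f t‖ ≤ C)
    (hx : 0 < x) : IntegrableOn (fun t => Real.exp (-x * t) * f t) (Ioi 0) :=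
  (integrableOn_exp_mul_Ioi (neg_neg_of_pos hx) 0).mul_bdd hf.aestronglyMeasurable
    (ae_restrict_of_forall_mem measurableSet_Ioi hC)

lemma laplaceTransform_add (hf : IntegrableOn (fun t => Real.exp (-x * t) * f t) (Ioi 0))
    (hg : IntegrableOn (fun t => Real.exp (-x * t) * g t) (Ioi 0)) :
    LaplaceTransform (fun t => f t + g t) x = LaplaceTransform f x + LaplaceTransform g x := by
  simp only [LaplaceTransform, mul_add, integral_add hf hg]

lemma laplaceTransform_const_mul (c : ℝ) (f : ℝ → ℝ) (x : ℝ) :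
    LaplaceTransform (fun t => c * f t) x = c * LaplaceTransform f x := by
  simp only [LaplaceTransform, mul_left_comm _ c, integral_const_mul]

lemma laplaceTransform_one_sub (hx : 0 < x)
    (hf : IntegrableOn (fun t => Real.exp (-x * t) * f t) (Ioi 0)) :
    LaplaceTransform (fun t => 1 - f t) x = 1 / x - LaplaceTransform f x := by
  simp only [LaplaceTransform, mul_sub, mul_one]
  rw [integral_sub (integrableOn_exp_mul_Ioi (neg_neg_of_pos hx) 0) hf,
    integral_exp_mul_Ioi (neg_neg_of_pos hx)]
  simp

lemma laplaceTransform_pos (hf : IntegrableOn (fun t => Real.exp (-x * t) * f t) (Ioi 0))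
    (h_pos : ∀ t, 0 < t → 0 < f t) : 0 < LaplaceTransform f x := by
  have h_integrand (t : ℝ) (ht : 0 < t) : 0 < Real.exp (-x * t) * f t :=
    mul_pos (Real.exp_pos _) (h_pos t ht)
  have h_support : Ioi 0 ⊆ Function.support fun t => Real.exp (-x * t) * f t :=
    fun t ht => (h_integrand t ht).ne'
  rw [LaplaceTransform, setIntegral_pos_iff_support_of_nonneg_ae
    (ae_restrict_of_forall_mem measurableSet_Ioi fun t ht => (h_integrand t ht).le) hf,
    inter_eq_right.2 h_support, Real.volume_Ioi]
  exact ENNReal.zero_lt_top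

lemma integrableOn_mul_exp_neg_mul_Ioi (hx : 0 < x) :
    IntegrableOn (fun s => s * Real.exp (-x * s)) (Ioi 0) := by
  simpa using integrableOn_rpow_mul_exp_neg_mul_rpow (p := 1) (s := 1) (by norm_num) one_pos hx

lemma integral_mul_exp_neg_mul_Ioi (hx : 0 < x) :
    ∫ s in Ioi 0, s * Real.exp (-x * s) = (x ^ 2)⁻¹ := by
  have h := Real.integral_rpow_mul_exp_neg_mul_Ioi (a := 2) two_pos hx
  norm_num at h
  simpa [Real.Gamma_two] using h

lemma laplaceTransform_eq_stieltjesTransform_two {μ : Measure ℝ} [SFinite μ]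
    (hμ : IsStieltjesMeasure 2 μ) (hf : ∀ s, 0 < s → f s = s * ∫ t, Real.exp (-s * t) ∂μ)
    (hx : 0 < x) : LaplaceTransform f x = stieltjesTransform 2 μ x := by
  have h_inner : ∀ᵐ t ∂μ, ∫ s in Ioi 0, s * Real.exp (-(x + t) * s) = ((x + t) ^ 2)⁻¹ := by
    filter_upwards [hμ.ae_nonneg] with t ht
    exact integral_mul_exp_neg_mul_Ioi (by positivity)
  have h_norm (t : ℝ) : ∫ s in Ioi 0, ‖s * Real.exp (-(x + t) * s)‖
      = ∫ s in Ioi 0, s * Real.exp (-(x + t) * s) :=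
    setIntegral_congr_fun measurableSet_Ioi fun s (hs : 0 < s) =>
      Real.norm_of_nonneg (by positivity)
  have h_prod : Integrable (fun p : ℝ × ℝ => p.1 * Real.exp (-(x + p.2) * p.1))
      ((volume.restrict (Ioi 0)).prod μ) := by
    refine (integrable_prod_iff' (by fun_prop)).2 ⟨?_, ?_⟩
    · filter_upwards [hμ.ae_nonneg] with t ht
      exact integrableOn_mul_exp_neg_mul_Ioi (by positivity)
    · simp only [h_norm]
      exact (hμ.integrable_inv_add_pow x hx).congr (h_inner.mono fun _ => Eq.symm)
  calc
    LaplaceTransform f x = ∫ s in Ioi 0, ∫ t, s * Real.exp (-(x + t) * s) ∂μ := by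
      refine setIntegral_congr_fun measurableSet_Ioi fun s hs => ?_
      rw [hf s hs, mul_left_comm, ← integral_const_mul, ← integral_const_mul]
      refine integral_congr_ae (.of_forall fun t => ?_)
      simp only [← Real.exp_add]
      ring_nf
    _ = ∫ t, (∫ s in Ioi 0, s * Real.exp (-(x + t) * s)) ∂μ := integral_integral_swap h_prod
    _ = stieltjesTransform 2 μ x := integral_congr_ae h_inner

lemma isGenStieltjes_two_laplaceTransform {μ : Measure ℝ} [SFinite μ]
    (hμ : IsStieltjesMeasure 2 μ) (hf : ∀ s, 0 < s → f s = s * ∫ t, Real.exp (-s * t) ∂μ) :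
    IsGenStieltjes 2 (LaplaceTransform f) :=
  isGenStieltjes_two_iff.2 ⟨μ, 0, le_rfl, hμ, fun x hx => by
    rw [laplaceTransform_eq_stieltjesTransform_two hμ hf hx, add_zero]⟩

end LaplaceTransform

namespace IsGenStieltjes

variable {lam : ℝ} {f g : ℝ → ℝ}

lemma congr (hfg : ∀ x, 0 < x → f x = g x) (hg : IsGenStieltjes lam g) : IsGenStieltjes lam f := by
  obtain ⟨μ, c, hc, hμ, h⟩ := hg
  exact ⟨μ, c, hc, hμ, fun x hx => ⟨(h x hx).1, (hfg x hx).trans (h x hx).2⟩⟩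

lemma add (hf : IsGenStieltjes lam f) (hg : IsGenStieltjes lam g) :
    IsGenStieltjes lam fun x => f x + g x := by
  obtain ⟨μ, c, hc, hμ, h⟩ := hf
  obtain ⟨ν, d, hd, hν, k⟩ := hg
  refine ⟨μ + ν, c + d, add_nonneg hc hd, by simp [hμ, hν], fun x hx =>
    ⟨(h x hx).1.add_measure (k x hx).1, ?_⟩⟩
  simp only [integral_add_measure (h x hx).1 (k x hx).1, (h x hx).2, (k x hx).2]
  ring

lemma const_mul {r : ℝ} (hr : 0 ≤ r) (hf : IsGenStieltjes lam f) :
    IsGenStieltjes lam fun x => r * f x := by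
  obtain ⟨μ, c, hc, hμ, h⟩ := hf
  refine ⟨ENNReal.ofReal r • μ, r * c, mul_nonneg hr hc, by simp [hμ], fun x hx =>
    ⟨(h x hx).1.smul_measure ENNReal.ofReal_ne_top, ?_⟩⟩
  simp only [integral_smul_measure, ENNReal.toReal_ofReal hr, (h x hx).2, smul_eq_mul, mul_add]

end IsGenStieltjes

/-- The union of the intervals `[a + 4 * k, a + 4 * k + 2)`, `k = 0, 1, 2, …`. Its indicator is the
density of the measure representing the Laplace transform of `betaKernel a`. -/
def alternateIntervals (a : ℝ) : Set ℝ := {t | a ≤ t ∧ Even ⌊(t - a) / 2⌋}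

/-- The function `e⁻ᵃˢ / (1 + e⁻²ˢ) = ∑ₖ (-1)ᵏ e^{-(a + 2 * k) s}`, whose Laplace transform is a
rescaled Nielsen beta function. -/
noncomputable def betaKernel (a s : ℝ) : ℝ := Real.exp (-a * s) / (1 + Real.exp (-2 * s))

section BetaKernel

variable {a s x : ℝ}

lemma alternateIntervals_subset_Ici (a : ℝ) : alternateIntervals a ⊆ Ici a := fun _ ht => ht.1

lemma measurableSet_alternateIntervals (a : ℝ) : MeasurableSet (alternateIntervals a) :=
  measurableSet_Ici.inter
    ((Int.measurable_floor.comp (by fun_prop)) (MeasurableSet.of_discrete (s := {n : ℤ | Even n})))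

lemma preimage_sub_two_alternateIntervals (a : ℝ) :
    (· - 2) ⁻¹' alternateIntervals a = Ici a \ alternateIntervals a := by
  ext t
  have h_floor : ⌊(t - 2 - a) / 2⌋ = ⌊(t - a) / 2⌋ - 1 := by
    rw [← Int.floor_sub_one]
    ring_nf
  have h_odd (h : ¬Even ⌊(t - a) / 2⌋) (hat : a ≤ t) : a ≤ t - 2 := by
    have h_pos : 0 < ⌊(t - a) / 2⌋ :=
      (Int.floor_nonneg.2 (by linarith)).lt_of_ne fun h0 => h (h0 ▸ Even.zero)
    linarith [Int.le_floor.1 (Int.add_one_le_of_lt h_pos)]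
  simp only [alternateIntervals, mem_preimage, mem_ofPred_eq, Set.mem_sdiff, mem_Ici, h_floor,
    Int.even_sub_one, not_and]
  exact ⟨fun h => ⟨by linarith [h.1], fun _ => h.2⟩, fun h => ⟨h_odd (h.2 h.1) h.1, h.2 h.1⟩⟩

lemma setIntegral_exp_neg_mul_preimage_sub (S : Set ℝ) (s b : ℝ) :
    ∫ t in (· - b) ⁻¹' S, Real.exp (-s * t) = Real.exp (-s * b) * ∫ t in S, Real.exp (-s * t) := by
  have h_shift := (measurePreserving_sub_right volume b).setIntegral_preimage_emb
    (measurableEmbedding_subRight b) (fun t => Real.exp (-s * b) * Real.exp (-s * t)) S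
  rw [← integral_const_mul, ← h_shift]
  simp only [← Real.exp_add, ← mul_add, add_sub_cancel]

lemma integrableOn_exp_neg_mul_Ici (hs : 0 < s) (a : ℝ) :
    IntegrableOn (fun t => Real.exp (-s * t)) (Ici a) :=
  (integrableOn_Ici_iff_integrableOn_Ioi).2 (integrableOn_exp_mul_Ioi (neg_neg_of_pos hs) a)

lemma integral_exp_neg_mul_Ici (hs : 0 < s) (a : ℝ) :
    ∫ t in Ici a, Real.exp (-s * t) = Real.exp (-a * s) / s := by
  rw [integral_Ici_eq_integral_Ioi, integral_exp_mul_Ioi (neg_neg_of_pos hs), neg_div_neg_eq]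
  ring_nf

lemma betaKernel_eq_mul_setIntegral (hs : 0 < s) (a : ℝ) :
    betaKernel a s = s * ∫ t in alternateIntervals a, Real.exp (-s * t) := by
  have h_shift := setIntegral_exp_neg_mul_preimage_sub (alternateIntervals a) s 2
  rw [preimage_sub_two_alternateIntervals, setIntegral_sdiff (measurableSet_alternateIntervals a)
    (integrableOn_exp_neg_mul_Ici hs a) (alternateIntervals_subset_Ici a),
    integral_exp_neg_mul_Ici hs, sub_eq_iff_eq_add, div_eq_iff hs.ne', mul_comm (-s)] at h_shift
  rw [betaKernel, div_eq_iff (by positivity), h_shift]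
  ring_nf

lemma one_sub_betaKernel_eq_mul_setIntegral (hs : 0 < s) (ha : 0 ≤ a) :
    1 - betaKernel a s = s * ∫ t in Ici 0 \ alternateIntervals a, Real.exp (-s * t) := by
  rw [setIntegral_sdiff (measurableSet_alternateIntervals a) (integrableOn_exp_neg_mul_Ici hs 0)
    ((alternateIntervals_subset_Ici a).trans (Ici_subset_Ici.2 ha)), mul_sub,
    integral_exp_neg_mul_Ici hs, ← betaKernel_eq_mul_setIntegral hs, mul_div_cancel₀ _ hs.ne']
  simp

lemma isStieltjesMeasure_two_volume_restrict {S : Set ℝ} (hS : S ⊆ Ici 0) :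
    IsStieltjesMeasure 2 (volume.restrict S) := by
  suffices h : IsStieltjesMeasure 2 (volume.restrict (Ici 0)) from
    h.mono (Measure.restrict_mono_set volume hS)
  refine ⟨ae_restrict_mem measurableSet_Ici, fun x hx => ?_⟩
  have h_int := integrableOn_add_rpow_Ioi_of_lt (a := -2) (c := 0) (m := x) (by norm_num)
    (by linarith)
  simpa only [IntegrableOn, add_comm _ x, rpow_neg_two,
    restrict_Ioi_eq_restrict_Ici] using h_int

lemma isGenStieltjes_laplaceTransform_betaKernel (ha : 0 ≤ a) :
    IsGenStieltjes 2 (LaplaceTransform (betaKernel a)) :=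
  isGenStieltjes_two_laplaceTransform
    (isStieltjesMeasure_two_volume_restrict
      ((alternateIntervals_subset_Ici a).trans (Ici_subset_Ici.2 ha)))
    fun _ hs => betaKernel_eq_mul_setIntegral hs a

lemma isGenStieltjes_laplaceTransform_one_sub_betaKernel (ha : 0 ≤ a) :
    IsGenStieltjes 2 (LaplaceTransform fun s => 1 - betaKernel a s) :=
  isGenStieltjes_two_laplaceTransform (isStieltjesMeasure_two_volume_restrict sdiff_subset)
    fun _ hs => one_sub_betaKernel_eq_mul_setIntegral hs ha

lemma measurable_betaKernel (a : ℝ) : Measurable (betaKernel a) := by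
  unfold betaKernel
  fun_prop

lemma betaKernel_pos (a s : ℝ) : 0 < betaKernel a s := by
  unfold betaKernel
  positivity

lemma betaKernel_lt_one (ha : 0 ≤ a) (hs : 0 ≤ s) : betaKernel a s < 1 := by
  rw [betaKernel, div_lt_one (by positivity)]
  have h_num : Real.exp (-a * s) ≤ 1 := Real.exp_le_one_iff.2 (by nlinarith)
  linarith [Real.exp_pos (-2 * s)]

lemma integrableOn_exp_mul_betaKernel (ha : 0 ≤ a) (hx : 0 < x) :
    IntegrableOn (fun t => Real.exp (-x * t) * betaKernel a t) (Ioi 0) :=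
  integrableOn_exp_mul_of_norm_le (measurable_betaKernel a) (fun t ht => by
    rw [Real.norm_of_nonneg (betaKernel_pos a t).le]
    exact (betaKernel_lt_one ha ht.le).le) hx

lemma integrableOn_exp_mul_one_sub_betaKernel (ha : 0 ≤ a) (hx : 0 < x) :
    IntegrableOn (fun t => Real.exp (-x * t) * (1 - betaKernel a t)) (Ioi 0) := by
  simp only [mul_sub, mul_one]
  exact (integrableOn_exp_mul_Ioi (neg_neg_of_pos hx) 0).sub (integrableOn_exp_mul_betaKernel ha hx)

lemma laplaceTransform_betaKernel_pos (ha : 0 ≤ a) (hx : 0 < x) :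
    0 < LaplaceTransform (betaKernel a) x :=
  laplaceTransform_pos (integrableOn_exp_mul_betaKernel ha hx) fun t _ => betaKernel_pos a t

lemma laplaceTransform_one_sub_betaKernel_pos (ha : 0 ≤ a) (hx : 0 < x) :
    0 < LaplaceTransform (fun s => 1 - betaKernel a s) x :=
  laplaceTransform_pos (integrableOn_exp_mul_one_sub_betaKernel ha hx) fun _ ht =>
    sub_pos.2 (betaKernel_lt_one ha ht.le)

lemma laplaceTransform_betaKernel (a x : ℝ) :
    LaplaceTransform (betaKernel a) x = 1 / 2 * nielsenBeta ((x + a) / 2) := by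
  have h := integral_comp_mul_left_Ioi
    (fun u => Real.exp (-((x + a) / 2) * u) / (1 + Real.exp (-u))) 0 two_pos
  rw [mul_zero, smul_eq_mul, ← one_div] at h
  rw [nielsenBeta, ← h]
  refine integral_congr_ae (.of_forall fun t => ?_)
  simp only [betaKernel, ← mul_div_assoc, ← Real.exp_add]
  ring_nf

end BetaKernel

section HyperbolicQuotient

variable {ν x : ℝ}

lemma cosh_mul_div_cosh (ν s : ℝ) :
    Real.cosh (ν * s) / Real.cosh s = betaKernel (1 - ν) s + betaKernel (1 + ν) s := by
  have h_cosh : Real.cosh s = Real.exp s * (1 + Real.exp (-2 * s)) / 2 := by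
    rw [Real.cosh_eq, mul_add, ← Real.exp_add]
    ring_nf
  have h_num (b : ℝ) : Real.exp (-(1 - b) * s) = Real.exp (b * s) / Real.exp s := by
    rw [← Real.exp_sub]
    ring_nf
  rw [betaKernel, betaKernel, h_num, ← sub_neg_eq_add 1 ν, h_num, h_cosh, Real.cosh_eq]
  field_simp

lemma one_sub_cosh_mul_div_two_mul_cosh (ν s : ℝ) :
    1 - Real.cosh (ν * s) / (2 * Real.cosh s)
      = 1 / 2 * (1 - betaKernel (1 - ν) s) + 1 / 2 * (1 - betaKernel (1 + ν) s) := by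
  rw [mul_comm 2, ← div_div, cosh_mul_div_cosh]
  ring

lemma laplaceTransform_cosh_mul_div_cosh (hν : |ν| ≤ 1) (hx : 0 < x) :
    LaplaceTransform (fun s => Real.cosh (ν * s) / Real.cosh s) x
      = LaplaceTransform (betaKernel (1 - ν)) x + LaplaceTransform (betaKernel (1 + ν)) x := by
  obtain ⟨h_neg, h_le⟩ := abs_le.1 hν
  simp only [cosh_mul_div_cosh]
  exact laplaceTransform_add (integrableOn_exp_mul_betaKernel (by linarith) hx)
    (integrableOn_exp_mul_betaKernel (by linarith) hx)

lemma laplaceTransform_one_sub_cosh_mul_div_two_mul_cosh (hν : |ν| ≤ 1) (hx : 0 < x) :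
    LaplaceTransform (fun s => 1 - Real.cosh (ν * s) / (2 * Real.cosh s)) x
      = 1 / 2 * (LaplaceTransform (fun s => 1 - betaKernel (1 - ν) s) x
        + LaplaceTransform (fun s => 1 - betaKernel (1 + ν) s) x) := by
  obtain ⟨h_neg, h_le⟩ := abs_le.1 hν
  simp only [one_sub_cosh_mul_div_two_mul_cosh, ← mul_add]
  rw [laplaceTransform_const_mul, laplaceTransform_add
    (integrableOn_exp_mul_one_sub_betaKernel (by linarith) hx)
    (integrableOn_exp_mul_one_sub_betaKernel (by linarith) hx)]

lemma isGenStieltjes_laplaceTransform_cosh_mul_div_cosh (hν : |ν| ≤ 1) :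
    IsGenStieltjes 2 (LaplaceTransform fun s => Real.cosh (ν * s) / Real.cosh s) := by
  obtain ⟨h_neg, h_le⟩ := abs_le.1 hν
  exact ((isGenStieltjes_laplaceTransform_betaKernel (by linarith)).add
    (isGenStieltjes_laplaceTransform_betaKernel (by linarith))).congr
    fun _ => laplaceTransform_cosh_mul_div_cosh hν

lemma isGenStieltjes_laplaceTransform_one_sub_cosh_mul_div_two_mul_cosh (hν : |ν| ≤ 1) :
    IsGenStieltjes 2
      (LaplaceTransform fun s => 1 - Real.cosh (ν * s) / (2 * Real.cosh s)) := by
  obtain ⟨h_neg, h_le⟩ := abs_le.1 hν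
  exact (((isGenStieltjes_laplaceTransform_one_sub_betaKernel (by linarith)).add
    (isGenStieltjes_laplaceTransform_one_sub_betaKernel (by linarith))).const_mul
    one_half_pos.le).congr fun _ => laplaceTransform_one_sub_cosh_mul_div_two_mul_cosh hν

lemma laplaceTransform_cosh_mul_div_cosh_pos (hν : |ν| ≤ 1) (hx : 0 < x) :
    0 < LaplaceTransform (fun s => Real.cosh (ν * s) / Real.cosh s) x := by
  obtain ⟨h_neg, h_le⟩ := abs_le.1 hν
  rw [laplaceTransform_cosh_mul_div_cosh hν hx]
  exact add_pos (laplaceTransform_betaKernel_pos (by linarith) hx)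
    (laplaceTransform_betaKernel_pos (by linarith) hx)

lemma laplaceTransform_one_sub_cosh_mul_div_two_mul_cosh_pos (hν : |ν| ≤ 1) (hx : 0 < x) :
    0 < LaplaceTransform (fun s => 1 - Real.cosh (ν * s) / (2 * Real.cosh s)) x := by
  obtain ⟨h_neg, h_le⟩ := abs_le.1 hν
  rw [laplaceTransform_one_sub_cosh_mul_div_two_mul_cosh hν hx]
  exact mul_pos one_half_pos (add_pos (laplaceTransform_one_sub_betaKernel_pos (by linarith) hx)
    (laplaceTransform_one_sub_betaKernel_pos (by linarith) hx))

lemma laplaceTransform_cosh_mul_div_cosh_eq_nielsenBeta (hν : |ν| ≤ 1) (hx : 0 < x) :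
    LaplaceTransform (fun s => Real.cosh (ν * s) / Real.cosh s) x
      = 1 / 2 * (nielsenBeta ((x + 1 - ν) / 2) + nielsenBeta ((x + 1 + ν) / 2)) := by
  rw [laplaceTransform_cosh_mul_div_cosh hν hx, laplaceTransform_betaKernel,
    laplaceTransform_betaKernel, ← mul_add, add_sub_assoc, add_assoc]

lemma laplaceTransform_one_sub_cosh_mul_div_two_mul_cosh_eq_nielsenBeta (hν : |ν| ≤ 1)
    (hx : 0 < x) :
    LaplaceTransform (fun s => 1 - Real.cosh (ν * s) / (2 * Real.cosh s)) x
      = 1 / x - 1 / 4 * (nielsenBeta ((x + 1 - ν) / 2) + nielsenBeta ((x + 1 + ν) / 2)) := by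
  obtain ⟨h_neg, h_le⟩ := abs_le.1 hν
  rw [laplaceTransform_one_sub_cosh_mul_div_two_mul_cosh hν hx,
    laplaceTransform_one_sub hx (integrableOn_exp_mul_betaKernel (by linarith) hx),
    laplaceTransform_one_sub hx (integrableOn_exp_mul_betaKernel (by linarith) hx),
    laplaceTransform_betaKernel, laplaceTransform_betaKernel, add_sub_assoc, add_assoc]
  ring

end HyperbolicQuotient

/-- Theorem: for `ν ∈ [0,1]`, the Laplace transforms of `σ₁(x) = 1 - cosh(νx)/(2 cosh x)` and
`σ₂(x) = cosh(νx)/cosh x` are generalized Stieltjes functions of order 2 (hence logarithmically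
completely monotonic), with the stated expressions in terms of Nielsen's beta function. -/
theorem stmt7 (ν : ℝ) (hν0 : 0 ≤ ν) (hν1 : ν ≤ 1) :
    IsGenStieltjes 2 (LaplaceTransform (fun x => 1 - Real.cosh (ν * x) / (2 * Real.cosh x))) ∧
    LogCompletelyMonotonic
      (LaplaceTransform (fun x => 1 - Real.cosh (ν * x) / (2 * Real.cosh x))) ∧
    IsGenStieltjes 2 (LaplaceTransform (fun x => Real.cosh (ν * x) / Real.cosh x)) ∧
    LogCompletelyMonotonic (LaplaceTransform (fun x => Real.cosh (ν * x) / Real.cosh x)) ∧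
    (∀ x : ℝ, 0 < x →
      LaplaceTransform (fun x => 1 - Real.cosh (ν * x) / (2 * Real.cosh x)) x
        = 1 / x - (1 / 4) * (nielsenBeta ((x + 1 - ν) / 2) + nielsenBeta ((x + 1 + ν) / 2))) ∧
    (∀ x : ℝ, 0 < x →
      LaplaceTransform (fun x => Real.cosh (ν * x) / Real.cosh x) x
        = (1 / 2) * (nielsenBeta ((x + 1 - ν) / 2) + nielsenBeta ((x + 1 + ν) / 2))) := by
  have hν : |ν| ≤ 1 := abs_le.2 ⟨by linarith, hν1⟩
  have hσ₁ := isGenStieltjes_laplaceTransform_one_sub_cosh_mul_div_two_mul_cosh hν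
  have hσ₂ := isGenStieltjes_laplaceTransform_cosh_mul_div_cosh hν
  exact ⟨hσ₁,
    hσ₁.logCompletelyMonotonic fun _ => laplaceTransform_one_sub_cosh_mul_div_two_mul_cosh_pos hν,
    hσ₂,
    hσ₂.logCompletelyMonotonic fun _ => laplaceTransform_cosh_mul_div_cosh_pos hν,
    fun _ => laplaceTransform_one_sub_cosh_mul_div_two_mul_cosh_eq_nielsenBeta hν,
    fun _ => laplaceTransform_cosh_mul_div_cosh_eq_nielsenBeta hν⟩
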